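/- Let (Ω, H, P, K) be an N-way counterfactual causal space, let U ⊆ T, and let Q be a probability measure on (Ω, H_U). Then the intervention causal mechanism satisfies the no-cross-world-causal-effect axiom: for every j ∈ {1,…,N}, every S ⊆ T, every ω ∈ Ω and every A ∈ H^j, K^{do(U,Q)}_S(ω, A) = K^{do(U,Q)}_{S ∩ T^j}(ω, A). -/

import Mathlib

/-!
The two integrands agree pointwise. By the no-cross-world axiom for `K`, for `A ∈ H^j` both kernels
can be replaced by `K_V` with `V = (S ∪ U) ∩ T^j = ((S ∩ T^j) ∪ U) ∩ T^j`. As a function of the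
outcome, `K_V(·, A)` is `H_V`-measurable, hence depends only on the coordinates in `V`
(`eq_of_measurable_cyl`). The two patched outcomes agree there: for `t ∈ T^j`, membership in `S`
and in `S ∩ T^j` are the same.
-/

open MeasureTheory ENNReal

/-- The sub-σ-algebra of the product σ-algebra generated by the coordinate
projections `ω ↦ ω t` for `t ∈ S`. -/
def cyl {ι : Type*} (Ωt : ι → Type*) [∀ t, MeasurableSpace (Ωt t)] (S : Set ι) :
    MeasurableSpace (∀ t, Ωt t) :=
  ⨆ t ∈ S, MeasurableSpace.comap (fun ω => ω t) inferInstance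

open Classical in
/-- `patch Ωt U S ω ω'` agrees with `ω'` on the coordinates in `U \ S` and with
`ω` on all other coordinates. -/
noncomputable def patch {ι : Type*} (Ωt : ι → Type*) (U S : Set ι)
    (ω ω' : ∀ t, Ωt t) : ∀ t, Ωt t :=
  fun t => if t ∈ U \ S then ω' t else ω t

theorem cyl_le_pi {ι : Type*} (Ωt : ι → Type*) [∀ t, MeasurableSpace (Ωt t)] (S : Set ι) :
    cyl Ωt S ≤ MeasurableSpace.pi :=
  iSup₂_le fun t _ => (measurable_pi_apply t).comap_le

/-- A function measurable with respect to `H_S` depends only on the coordinates in `S`. -/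
theorem eq_of_measurable_cyl {ι : Type*} (Ωt : ι → Type*) [∀ t, MeasurableSpace (Ωt t)]
    (S : Set ι) (f : (∀ t, Ωt t) → ℝ≥0∞) (hf : Measurable[cyl Ωt S] f)
    (a b : ∀ t, Ωt t) (hab : ∀ t ∈ S, a t = b t) : f a = f b := by
  -- `H_S` is coarser than the pullback of the full powerset along restriction to `S`.
  have hle : cyl Ωt S ≤ MeasurableSpace.comap (S.domRestrict (π := Ωt)) ⊤ := by
    refine iSup₂_le fun t ht => ?_
    rintro _ ⟨B, -, rfl⟩
    exact ⟨(fun x => x ⟨t, ht⟩) ⁻¹' B, trivial, rfl⟩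
  obtain ⟨B, -, hB⟩ := hle _ (hf (measurableSet_singleton (f b)))
  have hres : S.domRestrict a = S.domRestrict b := funext fun t => hab t t.2
  have hb : b ∈ S.domRestrict ⁻¹' B := by rw [hB]; rfl
  have ha : a ∈ S.domRestrict ⁻¹' B := by
    rw [Set.mem_preimage, hres]; exact hb
  rw [hB] at ha
  exact ha

/-- The intervention causal mechanism satisfies the
no-cross-world-causal-effect axiom. -/
theorem interventionKernel_no_cross_world_effect
    {ι : Type*} {N : ℕ} (Ωt : ι → Type*) [∀ t, MeasurableSpace (Ωt t)]
    -- the worlds: `T^j = world ⁻¹' {j}` partition the index set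
    (world : ι → Fin N)
    -- the observational probability measure
    (P : Measure (∀ t, Ωt t)) (hP : IsProbabilityMeasure P)
    -- the causal mechanism: a family of probability kernels from `(Ω, H_S)` to `(Ω, H)`
    (K : Set ι → (∀ t, Ωt t) → Measure (∀ t, Ωt t))
    (hKprob : ∀ (S : Set ι) (ω : ∀ t, Ωt t), IsProbabilityMeasure (K S ω))
    (hKmeas : ∀ (S : Set ι) (A : Set (∀ t, Ωt t)), MeasurableSet A →
      Measurable[cyl Ωt S] fun ω => K S ω A)
    -- axiom (i)
    (hK1 : ∀ (ω : ∀ t, Ωt t) (A : Set (∀ t, Ωt t)), MeasurableSet A → K ∅ ω A = P A)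
    -- axiom (ii): no cross-world causal effect
    (hK2 : ∀ (j : Fin N) (S : Set ι) (ω : ∀ t, Ωt t) (A : Set (∀ t, Ωt t)),
      MeasurableSet[cyl Ωt (world ⁻¹' {j})] A → K S ω A = K (S ∩ world ⁻¹' {j}) ω A)
    -- axiom (iii): interventional determinism
    (hK3 : ∀ (S : Set ι) (ω : ∀ t, Ωt t) (A B : Set (∀ t, Ωt t)),
      MeasurableSet[cyl Ωt S] A → MeasurableSet B →
      K S ω (A ∩ B) = A.indicator (fun _ => (1 : ℝ≥0∞)) ω * K S ω B)
    -- the intervention: a probability measure `Q` on `(Ω, H_U)`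
    (U : Set ι) (Q : @Measure (∀ t, Ωt t) (cyl Ωt U)) (hQ : IsProbabilityMeasure Q) :
    -- conclusion: `K^{do(U,Q)}_S(ω, A) = K^{do(U,Q)}_{S ∩ T^j}(ω, A)` for `A ∈ H^j`
    ∀ (j : Fin N) (S : Set ι) (ω : ∀ t, Ωt t) (A : Set (∀ t, Ωt t)),
      MeasurableSet[cyl Ωt (world ⁻¹' {j})] A →
      ∫⁻ ω', K (S ∪ U) (patch Ωt U S ω ω') A ∂Q
        = ∫⁻ ω', K ((S ∩ world ⁻¹' {j}) ∪ U) (patch Ωt U (S ∩ world ⁻¹' {j}) ω ω') A ∂Q := by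
  intro j S ω A hA
  refine lintegral_congr fun ω' => ?_
  have hV : ((S ∩ world ⁻¹' {j}) ∪ U) ∩ world ⁻¹' {j} = (S ∪ U) ∩ world ⁻¹' {j} := by
    ext t
    simp only [Set.mem_inter_iff, Set.mem_union]
    tauto
  rw [hK2 j (S ∪ U) _ A hA, hK2 j ((S ∩ world ⁻¹' {j}) ∪ U) _ A hA, hV]
  refine eq_of_measurable_cyl Ωt _ _ (hKmeas _ A (cyl_le_pi Ωt _ _ hA)) _ _ ?_
  rintro t ⟨-, ht⟩
  have hiff : t ∈ U \ S ↔ t ∈ U \ (S ∩ world ⁻¹' {j}) := by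
    simp only [Set.mem_sdiff, Set.mem_inter_iff, ht, and_true]
  unfold patch
  split_ifs <;> tauto
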